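/- arXiv:1804.00542 — 2 statements merged into one kernel-verified Lean document; each statement's English description precedes it below -/
import Mathlib

section
/- For all positive real numbers x and y and every integer n, the inequality Aⁿ + Gⁿ ≤ Qⁿ + Hⁿ holds, where A = (x+y)/2, G = √(xy), Q = √((x²+y²)/2), and H = 2xy/(x+y) (here powers are integer powers, i.e. zpow). -/
/-!
Write `A`, `G`, `Q`, `H` for the four means. The identities `A * H = G ^ 2` and
`Q ^ 2 + G ^ 2 = 2 * A ^ 2` give `Q + G ≤ 2 * A` and `Q * G ≤ A ^ 2`, whence `A + G ≤ Q + H`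
(because `2 * A * (A - H) = (Q + G) * (Q - G)`) and `Q * H ≤ A * G`; moreover `H ≤ A ≤ Q`.
For exponents `1 ≤ p`, the first comparison suffices because `t ↦ t ^ p` is convex and increasing
(weak majorization). For `p ≤ 0`, the order of the powers is reversed, so `A ^ p` lies between
`Q ^ p` and `H ^ p` and the second comparison bounds `A ^ p * G ^ p` by `Q ^ p * H ^ p`: among pairs
of positive numbers of given product, the more spread out one has the larger sum.
-/

section Comparison

variable {𝕜 E β : Type*} [Ring 𝕜] [AddCommGroup E] [Module 𝕜 E]

theorem add_sub_smul_add_smul {a b : 𝕜} (hab : a + b = 1) (x y : E) :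
    x + y - (a • x + b • y) = b • x + a • y := by
  obtain rfl : b = 1 - a := eq_sub_of_add_eq' hab
  simp only [sub_smul, one_smul]
  abel

variable [PartialOrder 𝕜]

theorem add_sub_mem_segment {x y z : E} (hz : z ∈ segment 𝕜 x y) :
    x + y - z ∈ segment 𝕜 x y := by
  obtain ⟨a, b, ha, hb, hab, rfl⟩ := hz
  exact ⟨b, a, hb, ha, by rw [add_comm, hab], (add_sub_smul_add_smul hab x y).symm⟩

theorem map_add_map_add_sub_le_of_convexOn [AddCommMonoid β] [PartialOrder β]
    [IsOrderedAddMonoid β] [Module 𝕜 β] {s : Set E} {f : E → β} (hf : ConvexOn 𝕜 s f)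
    {x y z : E} (hx : x ∈ s) (hy : y ∈ s) (hz : z ∈ segment 𝕜 x y) :
    f z + f (x + y - z) ≤ f x + f y := by
  obtain ⟨a, b, ha, hb, hab, rfl⟩ := hz
  have hba : b + a = 1 := by rw [add_comm, hab]
  calc f (a • x + b • y) + f (x + y - (a • x + b • y))
      ≤ (a • f x + b • f y) + (b • f x + a • f y) := by
        rw [add_sub_smul_add_smul hab]
        exact add_le_add (hf.2 hx hy ha hb hab) (hf.2 hx hy hb ha hba)
    _ = (a + b) • f x + (b + a) • f y := by
        simp only [add_smul]
        abel
    _ = f x + f y := by rw [hab, hba, one_smul, one_smul]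

end Comparison

theorem map_add_map_le_of_convexOn_of_monotoneOn {𝕜 β : Type*} [Field 𝕜] [LinearOrder 𝕜]
    [IsStrictOrderedRing 𝕜] [AddCommMonoid β] [PartialOrder β] [IsOrderedAddMonoid β] [Module 𝕜 β]
    {s : Set 𝕜} {f : 𝕜 → β} (hf : ConvexOn 𝕜 s f) (hmono : MonotoneOn f s) {a g q h : 𝕜}
    (hg : g ∈ s) (hq : q ∈ s) (hh : h ∈ s) (hha : h ≤ a) (haq : a ≤ q) (hsum : a + g ≤ q + h) :
    f a + f g ≤ f q + f h := by
  have ha : a ∈ segment 𝕜 h q := by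
    rw [segment_eq_Icc (hha.trans haq)]
    exact ⟨hha, haq⟩
  have hreflect : h + q - a ∈ s := hf.1.segment_subset hh hq (add_sub_mem_segment ha)
  calc f a + f g ≤ f a + f (h + q - a) := by
        gcongr
        exact hmono hg hreflect (by linarith)
    _ ≤ f h + f q := map_add_map_add_sub_le_of_convexOn hf hh hq ha
    _ = f q + f h := add_comm _ _

theorem add_le_add_of_mul_le_mul_of_mem_Icc {R : Type*} [CommRing R] [LinearOrder R]
    [IsStrictOrderedRing R] {a g q h : R} (ha : 0 < a) (haqh : a ∈ Set.Icc q h)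
    (hmul : a * g ≤ q * h) : a + g ≤ q + h := by
  refine le_of_mul_le_mul_left ?_ ha
  have hspread : 0 ≤ (a - q) * (h - a) :=
    mul_nonneg (sub_nonneg.2 haqh.1) (sub_nonneg.2 haqh.2)
  linarith

section Means

/-- The arithmetic mean `A` of two real numbers. -/
noncomputable def arithMean (x y : ℝ) : ℝ := (x + y) / 2

/-- The geometric mean `G` of two real numbers, meaningful for `0 ≤ x * y`. -/
noncomputable def geomMean (x y : ℝ) : ℝ := √(x * y)

/-- The quadratic mean (root mean square) `Q` of two real numbers. -/
noncomputable def quadMean (x y : ℝ) : ℝ := √((x ^ 2 + y ^ 2) / 2)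

/-- The harmonic mean `H` of two real numbers, written without inverses of `x` and `y`. It is
meaningful for `x + y ≠ 0`. -/
noncomputable def harmMean (x y : ℝ) : ℝ := 2 * x * y / (x + y)

variable {x y : ℝ}

theorem arithMean_pos (hx : 0 < x) (hy : 0 < y) : 0 < arithMean x y := by
  unfold arithMean
  positivity

theorem geomMean_pos (hx : 0 < x) (hy : 0 < y) : 0 < geomMean x y := by
  unfold geomMean
  positivity

theorem harmMean_pos (hx : 0 < x) (hy : 0 < y) : 0 < harmMean x y := by
  unfold harmMean
  positivity

theorem arithMean_mul_harmMean (hx : 0 < x) (hy : 0 < y) :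
    arithMean x y * harmMean x y = geomMean x y ^ 2 := by
  rw [arithMean, harmMean, geomMean, Real.sq_sqrt (by positivity)]
  field_simp

theorem quadMean_sq_add_geomMean_sq (hxy : 0 ≤ x * y) :
    quadMean x y ^ 2 + geomMean x y ^ 2 = 2 * arithMean x y ^ 2 := by
  rw [quadMean, geomMean, arithMean, Real.sq_sqrt (by positivity), Real.sq_sqrt hxy]
  ring

theorem arithMean_le_quadMean (x y : ℝ) : arithMean x y ≤ quadMean x y := by
  refine Real.le_sqrt_of_sq_le ?_
  rw [arithMean]
  linarith [add_sq_le (a := x) (b := y)]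

theorem harmMean_le_arithMean (hx : 0 < x) (hy : 0 < y) : harmMean x y ≤ arithMean x y := by
  rw [harmMean, arithMean, div_le_div_iff₀ (by positivity) two_pos]
  linarith [four_mul_le_sq_add x y]

theorem quadMean_add_geomMean_le (hx : 0 ≤ x) (hy : 0 ≤ y) :
    quadMean x y + geomMean x y ≤ 2 * arithMean x y := by
  have hA : 0 ≤ 2 * arithMean x y := by
    unfold arithMean
    positivity
  refine le_of_sq_le_sq ?_ hA
  calc (quadMean x y + geomMean x y) ^ 2
      ≤ 2 * (quadMean x y ^ 2 + geomMean x y ^ 2) := add_sq_le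
    _ = (2 * arithMean x y) ^ 2 := by
        rw [quadMean_sq_add_geomMean_sq (mul_nonneg hx hy)]
        ring

theorem quadMean_mul_geomMean_le (hxy : 0 ≤ x * y) :
    quadMean x y * geomMean x y ≤ arithMean x y ^ 2 := by
  linarith [two_mul_le_add_sq (quadMean x y) (geomMean x y), quadMean_sq_add_geomMean_sq hxy]

theorem arithMean_add_geomMean_le (hx : 0 < x) (hy : 0 < y) :
    arithMean x y + geomMean x y ≤ quadMean x y + harmMean x y := by
  have hbound := quadMean_add_geomMean_le hx.le hy.le
  have hAQ := arithMean_le_quadMean x y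
  have hAH := arithMean_mul_harmMean hx hy
  have hQG := quadMean_sq_add_geomMean_sq (mul_pos hx hy).le
  have hA := arithMean_pos hx hy
  set A := arithMean x y
  set G := geomMean x y
  set Q := quadMean x y
  set H := harmMean x y
  have hGQ : 0 ≤ Q - G := by linarith
  have hdiff : 2 * A * (A - H) ≤ 2 * A * (Q - G) :=
    calc 2 * A * (A - H) = (Q + G) * (Q - G) := by linear_combination -2 * hAH - hQG
      _ ≤ 2 * A * (Q - G) := by gcongr
  linarith [le_of_mul_le_mul_left hdiff (mul_pos two_pos hA)]

theorem quadMean_mul_harmMean_le (hx : 0 < x) (hy : 0 < y) :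
    quadMean x y * harmMean x y ≤ arithMean x y * geomMean x y := by
  refine le_of_mul_le_mul_left ?_ (arithMean_pos hx hy)
  calc arithMean x y * (quadMean x y * harmMean x y)
      = quadMean x y * (arithMean x y * harmMean x y) := by ring
    _ = quadMean x y * geomMean x y * geomMean x y := by
        rw [arithMean_mul_harmMean hx hy]
        ring
    _ ≤ arithMean x y ^ 2 * geomMean x y := by
        have hG := geomMean_pos hx hy
        gcongr
        exact quadMean_mul_geomMean_le (mul_pos hx hy).le
    _ = arithMean x y * (arithMean x y * geomMean x y) := by ring

theorem arithMean_rpow_add_geomMean_rpow_le_of_one_le (hx : 0 < x) (hy : 0 < y) {p : ℝ}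
    (hp : 1 ≤ p) :
    arithMean x y ^ p + geomMean x y ^ p ≤ quadMean x y ^ p + harmMean x y ^ p :=
  have hAQ := arithMean_le_quadMean x y
  map_add_map_le_of_convexOn_of_monotoneOn (convexOn_rpow hp)
    (Real.monotoneOn_rpow_Ici_of_exponent_nonneg (zero_le_one.trans hp))
    (geomMean_pos hx hy).le ((arithMean_pos hx hy).le.trans hAQ) (harmMean_pos hx hy).le
    (harmMean_le_arithMean hx hy) hAQ (arithMean_add_geomMean_le hx hy)

theorem arithMean_rpow_add_geomMean_rpow_le_of_nonpos (hx : 0 < x) (hy : 0 < y) {p : ℝ}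
    (hp : p ≤ 0) :
    arithMean x y ^ p + geomMean x y ^ p ≤ quadMean x y ^ p + harmMean x y ^ p := by
  have hA := arithMean_pos hx hy
  have hG := geomMean_pos hx hy
  have hH := harmMean_pos hx hy
  have hAQ := arithMean_le_quadMean x y
  have hQ := hA.trans_le hAQ
  refine add_le_add_of_mul_le_mul_of_mem_Icc (Real.rpow_pos_of_pos hA p)
    ⟨Real.rpow_le_rpow_of_nonpos hA hAQ hp,
      Real.rpow_le_rpow_of_nonpos hH (harmMean_le_arithMean hx hy) hp⟩ ?_
  rw [← Real.mul_rpow hA.le hG.le, ← Real.mul_rpow hQ.le hH.le]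
  exact Real.rpow_le_rpow_of_nonpos (mul_pos hQ hH) (quadMean_mul_harmMean_le hx hy) hp

theorem pow_mean_ineq_general (hx : 0 < x) (hy : 0 < y) {p : ℝ} (hp : p ≤ 0 ∨ 1 ≤ p) :
    arithMean x y ^ p + geomMean x y ^ p ≤ quadMean x y ^ p + harmMean x y ^ p :=
  hp.elim (arithMean_rpow_add_geomMean_rpow_le_of_nonpos hx hy)
    (arithMean_rpow_add_geomMean_rpow_le_of_one_le hx hy)

end Means

theorem pow_mean_ineq (x y : ℝ) (hx : 0 < x) (hy : 0 < y) (n : ℤ) :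
    ((x + y) / 2) ^ n + Real.sqrt (x * y) ^ n ≤
      Real.sqrt ((x ^ 2 + y ^ 2) / 2) ^ n + (2 * x * y / (x + y)) ^ n := by
  have hn : (n : ℝ) ≤ 0 ∨ 1 ≤ (n : ℝ) := by
    exact_mod_cast (show n ≤ 0 ∨ 1 ≤ n by lia)
  simpa only [Real.rpow_intCast, arithMean, geomMean, quadMean, harmMean] using
    pow_mean_ineq_general hx hy hn
end

section
/- For all positive real numbers x and y, A + G ≤ Q + H, where A = (x+y)/2, G = √(xy), Q = √((x²+y²)/2), and H = 2xy/(x+y); equality holds if and only if x = y. -/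
/-!
Since `G² = A H` and `Q² + G² = 2 A²`, the numbers `H = G² / A` and `Q = √(2 A² - G²)` are functions
of `A` and `G` alone, and `A + G ≤ Q + H` reduces to the nonnegativity of
`Q² - (A + G - H)² = (A - G)³ (A + G) / A²`.
-/

theorem add_sub_sq_div_lt_sqrt {a g : ℝ} (hga : |g| < a) :
    a + g - g ^ 2 / a < √(2 * a ^ 2 - g ^ 2) := by
  have ha : 0 < a := (abs_nonneg g).trans_lt hga
  have h_sub : 0 < a - g := sub_pos.mpr (abs_lt.mp hga).2
  have h_add : 0 < a + g := neg_lt_iff_pos_add'.mp (abs_lt.mp hga).1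
  have h_identity : 2 * a ^ 2 - g ^ 2 - (a + g - g ^ 2 / a) ^ 2 =
      (a - g) ^ 3 * (a + g) / a ^ 2 := by
    field_simp
    ring
  apply Real.lt_sqrt_of_sq_lt
  rw [← sub_pos, h_identity]
  positivity

theorem sqrt_mul_lt_add_div_two {x y : ℝ} (hsum : 0 < x + y) (hne : x ≠ y) :
    √(x * y) < (x + y) / 2 := by
  rw [Real.sqrt_lt' (half_pos hsum)]
  linarith [sq_pos_of_ne_zero (sub_ne_zero.mpr hne)]

theorem two_mul_mul_div_add_eq_sq_sqrt_div {x y : ℝ} (hxy : 0 ≤ x * y) :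
    2 * x * y / (x + y) = √(x * y) ^ 2 / ((x + y) / 2) := by
  rw [Real.sq_sqrt hxy, div_div_eq_mul_div]
  ring

theorem sq_add_sq_div_two_eq_sub_sq_sqrt {x y : ℝ} (hxy : 0 ≤ x * y) :
    (x ^ 2 + y ^ 2) / 2 = 2 * ((x + y) / 2) ^ 2 - √(x * y) ^ 2 := by
  rw [Real.sq_sqrt hxy]
  ring

theorem add_div_two_add_sqrt_mul_lt {x y : ℝ} (hx : 0 ≤ x) (hy : 0 ≤ y) (hne : x ≠ y) :
    (x + y) / 2 + √(x * y) < √((x ^ 2 + y ^ 2) / 2) + 2 * x * y / (x + y) := by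
  have hxy : 0 ≤ x * y := mul_nonneg hx hy
  have hsum : 0 < x + y := by
    rcases hne.lt_or_gt with h | h <;> linarith
  have hGA : |√(x * y)| < (x + y) / 2 := by
    simpa only [abs_of_nonneg (Real.sqrt_nonneg _)] using sqrt_mul_lt_add_div_two hsum hne
  rw [two_mul_mul_div_add_eq_sq_sqrt_div hxy, sq_add_sq_div_two_eq_sub_sq_sqrt hxy]
  exact sub_lt_iff_lt_add.mp (add_sub_sq_div_lt_sqrt hGA)

theorem add_self_div_two_add_sqrt_mul_self {x : ℝ} (hx : 0 < x) :
    (x + x) / 2 + √(x * x) = √((x ^ 2 + x ^ 2) / 2) + 2 * x * x / (x + x) := by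
  have hH : 2 * x * x / (x + x) = x := by
    rw [← two_mul, mul_div_cancel_left₀ x (mul_pos two_pos hx).ne']
  rw [hH, add_self_div_two, add_self_div_two, Real.sqrt_mul_self hx.le, Real.sqrt_sq hx.le]

theorem AG_le_QH_sum (x y : ℝ) (hx : 0 < x) (hy : 0 < y) :
    ((x + y) / 2 + Real.sqrt (x * y) ≤
      Real.sqrt ((x ^ 2 + y ^ 2) / 2) + 2 * x * y / (x + y)) ∧
    ((x + y) / 2 + Real.sqrt (x * y) =
      Real.sqrt ((x ^ 2 + y ^ 2) / 2) + 2 * x * y / (x + y) ↔ x = y) := by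
  rcases eq_or_ne x y with rfl | hne
  · have h_eq := add_self_div_two_add_sqrt_mul_self hx
    exact ⟨h_eq.le, iff_of_true h_eq rfl⟩
  · have h_lt := add_div_two_add_sqrt_mul_lt hx.le hy.le hne
    exact ⟨h_lt.le, iff_of_false h_lt.ne hne⟩
end
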